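/- (Theorem 5: privacy of region-adaptive pixelization) Let M = G_R·b, N = G_C·b, b = n·s_b with n ≥ 1, m ≥ 1, ε > 0, and partition the grid index set into simple grids 𝒮 and complex grids 𝒞, with each complex grid subdivided into n² subgrids of size s_b×s_b. Define the mechanism that, for an image I with values in [0,255], outputs μ_{r,c}(I) + η_{r,c} for each simple grid with η_{r,c} independent Laplace of scale σ = 255·m/(b²·ε), and ν_{r,c,u,v}(I) + η_{r,c,u,v} for each subgrid of each complex grid with η_{r,c,u,v} independent Laplace of scale σ_s = 255·m/(s_b²·ε), all noises mutually independent (so the output distribution μ_I is the corresponding product of translated Laplace measures). Then for any two images I₁, I₂ with values in [0,255] differing at at most m positions and every measurable set S of the output space, μ_{I₁}(S) ≤ exp(ε) · μ_{I₂}(S); i.e., the entire region-adaptive process satisfies ε-differential privacy. -/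

import Mathlib

/-!
Each released coordinate is a cell mean plus Laplace noise, and in both cases the noise scale equals
`255 * m / (k * ε)` with `k` the number of pixels in the cell. Translating a Laplace measure of
scale `σ` by `a` rather than `a'` changes its density by a factor of at most `exp (|a - a'| / σ)`
(`laplace_map_le`), so coordinate `i` costs a factor of at most `exp w_i` with
`w_i = ε / (255 * m) * ∑_{p in cell i} |I₁ p - I₂ p|`. Coordinatewise domination passes to product
measures with the product of the constants (`pi_le_of_le`), so the total cost is `exp (∑ w_i)`.

The cells (simple grids, and subgrids of complex grids) are pairwise disjoint
(`cell_unique`), so every pixel is counted at most once; the images differ in at most `m` pixels,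
by at most `255` in each, and therefore `∑ w_i ≤ ε`.
-/

open MeasureTheory

/-- The Laplace measure with scale `σ` on `ℝ`. -/
noncomputable def laplaceMeasure (σ : ℝ) : Measure ℝ :=
  volume.withDensity (fun t => ENNReal.ofReal ((1 / (2 * σ)) * Real.exp (-|t| / σ)))

/-- The `b×b` grid with index `(r,c)`, where `b = n·s_b`. -/
def grid (G_R G_C b : ℕ) (rc : Fin G_R × Fin G_C) :
    Finset (Fin (G_R * b) × Fin (G_C * b)) :=
  Finset.univ.filter (fun p =>
    rc.1.val * b ≤ p.1.val ∧ p.1.val < (rc.1.val + 1) * b ∧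
    rc.2.val * b ≤ p.2.val ∧ p.2.val < (rc.2.val + 1) * b)

/-- The grid mean `μ_{r,c}(I) = (1/b²) · ∑_{(i,j) ∈ G_{r,c}} I(i,j)`. -/
noncomputable def gridMean (G_R G_C b : ℕ) (I : Fin (G_R * b) × Fin (G_C * b) → ℝ)
    (rc : Fin G_R × Fin G_C) : ℝ :=
  (1 / (b : ℝ) ^ 2) * ∑ p ∈ grid G_R G_C b rc, I p

/-- With `b = n·s_b`, the `s_b×s_b` subgrid of the grid `(r,c)` indexed by
`(u,v) ∈ Fin n × Fin n`. -/
def subgrid (G_R G_C n s_b : ℕ) (rc : Fin G_R × Fin G_C) (uv : Fin n × Fin n) :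
    Finset (Fin (G_R * (n * s_b)) × Fin (G_C * (n * s_b))) :=
  Finset.univ.filter (fun p =>
    rc.1.val * (n * s_b) + uv.1.val * s_b ≤ p.1.val ∧
    p.1.val < rc.1.val * (n * s_b) + (uv.1.val + 1) * s_b ∧
    rc.2.val * (n * s_b) + uv.2.val * s_b ≤ p.2.val ∧
    p.2.val < rc.2.val * (n * s_b) + (uv.2.val + 1) * s_b)

/-- The subgrid mean `ν_{r,c,u,v}(I) = (1/s_b²) · ∑` of `I` over the subgrid. -/
noncomputable def subgridMean (G_R G_C n s_b : ℕ)
    (I : Fin (G_R * (n * s_b)) × Fin (G_C * (n * s_b)) → ℝ)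
    (rc : Fin G_R × Fin G_C) (uv : Fin n × Fin n) : ℝ :=
  (1 / (s_b : ℝ) ^ 2) * ∑ p ∈ subgrid G_R G_C n s_b rc uv, I p

/-- Output distribution of the region-adaptive mechanism: one independently
noised value `μ_{r,c}(I) + Laplace(σ)` for each simple grid, and one value
`ν_{r,c,u,v}(I) + Laplace(σ_s)` for each subgrid of each complex grid; the joint
distribution is the product of the translated Laplace measures. -/
noncomputable def regionAdaptiveMech (G_R G_C n s_b : ℕ) (σ σs : ℝ)
    (simple complex : Finset (Fin G_R × Fin G_C))
    (I : Fin (G_R * (n * s_b)) × Fin (G_C * (n * s_b)) → ℝ) :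
    Measure (({rc // rc ∈ simple} ⊕ ({rc // rc ∈ complex} × (Fin n × Fin n))) → ℝ) :=
  Measure.pi fun i =>
    Sum.elim
      (fun rc : {rc // rc ∈ simple} =>
        (laplaceMeasure σ).map (fun η => gridMean G_R G_C (n * s_b) I rc.1 + η))
      (fun x : {rc // rc ∈ complex} × (Fin n × Fin n) =>
        (laplaceMeasure σs).map (fun η => subgridMean G_R G_C n s_b I x.1.1 x.2 + η)) i

/-- Domination of measures is stable under finite products, the constants being multiplied. The
measure `Measure.pi ν` comes from the largest outer measure bounded on boxes by the product of the
side measures, so the comparison only has to be made on boxes. -/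
lemma pi_le_of_le {ι : Type*} [Fintype ι] (μ ν : ι → Measure ℝ) [∀ i, SigmaFinite (μ i)]
    (w : ι → ℝ)
    (h : ∀ i s, μ i s ≤ ENNReal.ofReal (Real.exp (w i)) * ν i s)
    (S : Set (ι → ℝ)) (hS : MeasurableSet S) :
    Measure.pi μ S ≤ ENNReal.ofReal (Real.exp (∑ i, w i)) * Measure.pi ν S := by
  have key : ENNReal.ofReal (Real.exp (-∑ i, w i)) • (Measure.pi μ).toOuterMeasure ≤
      OuterMeasure.pi fun i => (ν i).toOuterMeasure := by
    rw [OuterMeasure.le_pi]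
    intro s _
    have hbox : Measure.pi μ (Set.univ.pi s) ≤
        ENNReal.ofReal (Real.exp (∑ i, w i)) * ∏ i, ν i (s i) := by
      rw [Measure.pi_pi, Real.exp_sum, ENNReal.ofReal_prod_of_nonneg
        (fun i _ => (Real.exp_pos _).le), ← Finset.prod_mul_distrib]
      exact Finset.prod_le_prod' fun i _ => h i (s i)
    calc ENNReal.ofReal (Real.exp (-∑ i, w i)) * Measure.pi μ (Set.univ.pi s)
        ≤ ENNReal.ofReal (Real.exp (-∑ i, w i)) *
          (ENNReal.ofReal (Real.exp (∑ i, w i)) * ∏ i, ν i (s i)) := by gcongr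
      _ = ∏ i, ν i (s i) := by
        rw [← mul_assoc, ← ENNReal.ofReal_mul (Real.exp_pos _).le, ← Real.exp_add]
        simp
  have hle := key S
  have hν : Measure.pi ν S = OuterMeasure.pi (fun i => (ν i).toOuterMeasure) S := by
    rw [Measure.pi, toMeasure_apply _ _ hS]
  rw [hν]
  calc Measure.pi μ S = ENNReal.ofReal (Real.exp (∑ i, w i)) *
        (ENNReal.ofReal (Real.exp (-∑ i, w i)) * Measure.pi μ S) := by
        rw [← mul_assoc, ← ENNReal.ofReal_mul (Real.exp_pos _).le, ← Real.exp_add]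
        simp
    _ ≤ _ := by gcongr; exact hle

lemma laplace_map_eq (σ a : ℝ) :
    (laplaceMeasure σ).map (fun η => a + η) = volume.withDensity
      (fun t => ENNReal.ofReal ((1 / (2 * σ)) * Real.exp (-|t - a| / σ))) := by
  ext s hs
  rw [Measure.map_apply (measurable_const_add a) hs, laplaceMeasure,
    withDensity_apply _ (measurable_const_add a hs), withDensity_apply _ hs]
  have hshift := (measurePreserving_add_left volume a).setLIntegral_comp_preimage_emb
    (measurableEmbedding_addLeft a)
    (fun t => ENNReal.ofReal ((1 / (2 * σ)) * Real.exp (-|t - a| / σ))) s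
  simpa only [add_sub_cancel_left] using hshift

lemma laplace_map_sigmaFinite (σ a : ℝ) :
    SigmaFinite ((laplaceMeasure σ).map (fun η => a + η)) := by
  rw [laplace_map_eq]
  infer_instance

lemma laplace_map_le {σ : ℝ} (hσ : 0 < σ) {a a' w : ℝ} (h : |a - a'| / σ ≤ w) (s : Set ℝ) :
    (laplaceMeasure σ).map (fun η => a + η) s ≤
      ENNReal.ofReal (Real.exp w) * (laplaceMeasure σ).map (fun η => a' + η) s := by
  rw [laplace_map_eq, laplace_map_eq, ← smul_eq_mul (ENNReal.ofReal _), ← Measure.smul_apply,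
    ← withDensity_smul' _ _ ENNReal.ofReal_ne_top]
  refine withDensity_mono (Filter.Eventually.of_forall fun t => ?_) s
  simp only [Pi.smul_apply, smul_eq_mul]
  rw [← ENNReal.ofReal_mul (Real.exp_pos _).le]
  apply ENNReal.ofReal_le_ofReal
  rw [mul_left_comm, ← Real.exp_add]
  have htri : |t - a'| ≤ |t - a| + |a - a'| := abs_sub_le t a a'
  have hexp : -|t - a| / σ ≤ w + -|t - a'| / σ := by
    have : |t - a'| / σ ≤ |t - a| / σ + |a - a'| / σ := by
      rw [← add_div]; gcongr
    rw [neg_div, neg_div]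
    linarith
  gcongr

/-- The pixels entering output coordinate `i`: a whole grid on the left summand, a subgrid of a
complex grid on the right summand. -/
def cell (G_R G_C n s_b : ℕ) (simple complex : Finset (Fin G_R × Fin G_C)) :
    {rc // rc ∈ simple} ⊕ ({rc // rc ∈ complex} × (Fin n × Fin n)) →
      Finset (Fin (G_R * (n * s_b)) × Fin (G_C * (n * s_b))) :=
  Sum.elim (fun rc => grid G_R G_C (n * s_b) rc.1)
    (fun x => subgrid G_R G_C n s_b x.1.1 x.2)

lemma grid_unique {G_R G_C b : ℕ} {rc rc' : Fin G_R × Fin G_C}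
    {p : Fin (G_R * b) × Fin (G_C * b)} (h : p ∈ grid G_R G_C b rc)
    (h' : p ∈ grid G_R G_C b rc') : rc = rc' := by
  simp only [grid, Finset.mem_filter, Finset.mem_univ, true_and] at h h'
  obtain ⟨h1, h2, h3, h4⟩ := h
  obtain ⟨k1, k2, k3, k4⟩ := h'
  ext
  · rw [← Nat.div_eq_of_lt_le h1 h2, ← Nat.div_eq_of_lt_le k1 k2]
  · rw [← Nat.div_eq_of_lt_le h3 h4, ← Nat.div_eq_of_lt_le k3 k4]

lemma subgrid_subset_grid (G_R G_C n s_b : ℕ) (rc : Fin G_R × Fin G_C) (uv : Fin n × Fin n) :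
    subgrid G_R G_C n s_b rc uv ⊆ grid G_R G_C (n * s_b) rc := by
  intro p h
  simp only [grid, subgrid, Finset.mem_filter, Finset.mem_univ, true_and] at h ⊢
  obtain ⟨h1, h2, h3, h4⟩ := h
  have hu : (uv.1.val + 1) * s_b ≤ n * s_b := Nat.mul_le_mul_right _ uv.1.isLt
  have hv : (uv.2.val + 1) * s_b ≤ n * s_b := Nat.mul_le_mul_right _ uv.2.isLt
  rw [Nat.succ_mul, Nat.succ_mul]
  refine ⟨?_, ?_, ?_, ?_⟩ <;> omega

lemma subgrid_unique {G_R G_C n s_b : ℕ} {rc : Fin G_R × Fin G_C} {uv uv' : Fin n × Fin n}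
    {p : Fin (G_R * (n * s_b)) × Fin (G_C * (n * s_b))}
    (h : p ∈ subgrid G_R G_C n s_b rc uv) (h' : p ∈ subgrid G_R G_C n s_b rc uv') :
    uv = uv' := by
  simp only [subgrid, Finset.mem_filter, Finset.mem_univ, true_and] at h h'
  obtain ⟨h1, h2, h3, h4⟩ := h
  obtain ⟨k1, k2, k3, k4⟩ := h'
  have aux : ∀ {A x u u' : ℕ}, A + u * s_b ≤ x → x < A + (u' + 1) * s_b → u ≤ u' := by
    intro A x u u' hl hr
    have hlt : u * s_b < (u' + 1) * s_b := by omega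
    exact Nat.lt_succ_iff.mp (Nat.lt_of_mul_lt_mul_right hlt)
  ext
  · exact le_antisymm (aux h1 k2) (aux k1 h2)
  · exact le_antisymm (aux h3 k4) (aux k3 h4)

lemma cell_unique {G_R G_C n s_b : ℕ} {simple complex : Finset (Fin G_R × Fin G_C)}
    (hpart : ∀ rc, rc ∈ simple ↔ rc ∉ complex)
    {i j : {rc // rc ∈ simple} ⊕ ({rc // rc ∈ complex} × (Fin n × Fin n))}
    {p : Fin (G_R * (n * s_b)) × Fin (G_C * (n * s_b))}
    (hi : p ∈ cell G_R G_C n s_b simple complex i)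
    (hj : p ∈ cell G_R G_C n s_b simple complex j) : i = j := by
  rcases i with ⟨rc, hrc⟩ | ⟨⟨rc, hrc⟩, uv⟩ <;> rcases j with ⟨rc', hrc'⟩ | ⟨⟨rc', hrc'⟩, uv'⟩ <;>
    simp only [cell, Sum.elim_inl, Sum.elim_inr] at hi hj
  · obtain rfl := grid_unique hi hj
    rfl
  · obtain rfl := grid_unique hi (subgrid_subset_grid _ _ _ _ _ _ hj)
    exact absurd hrc' ((hpart rc).1 hrc)
  · obtain rfl := grid_unique (subgrid_subset_grid _ _ _ _ _ _ hi) hj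
    exact absurd hrc ((hpart rc).1 hrc')
  · obtain rfl := grid_unique (subgrid_subset_grid _ _ _ _ _ _ hi)
      (subgrid_subset_grid _ _ _ _ _ _ hj)
    obtain rfl := subgrid_unique hi hj
    rfl

/-- Sensitivity of one mean: the factor `k` (the number of pixels in the cell) cancels between the
mean and the noise scale. -/
lemma mean_shift_le {P : Type*} (s : Finset P) (I₁ I₂ : P → ℝ) {k m ε : ℝ} (hk : 0 < k)
    (hm : 0 < m) (hε : 0 < ε) :
    |1 / k * ∑ p ∈ s, I₁ p - 1 / k * ∑ p ∈ s, I₂ p| / (255 * m / (k * ε)) ≤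
      ε / (255 * m) * ∑ p ∈ s, |I₁ p - I₂ p| := by
  rw [← mul_sub, ← Finset.sum_sub_distrib, abs_mul, abs_of_pos (by positivity : 0 < 1 / k)]
  have heq : 1 / k * |∑ p ∈ s, (I₁ p - I₂ p)| / (255 * m / (k * ε)) =
      ε / (255 * m) * |∑ p ∈ s, (I₁ p - I₂ p)| := by
    field_simp
  rw [heq]
  gcongr
  exact Finset.abs_sum_le_sum_abs _ _

lemma sum_abs_diff_le {P : Type*} [Fintype P] (I₁ I₂ : P → ℝ)
    (hI₁ : ∀ q, I₁ q ∈ Set.Icc (0 : ℝ) 255) (hI₂ : ∀ q, I₂ q ∈ Set.Icc (0 : ℝ) 255) (m : ℕ)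
    (hdiff : {q | I₁ q ≠ I₂ q}.ncard ≤ m) : ∑ p, |I₁ p - I₂ p| ≤ 255 * m := by
  classical
  have hcard : (Finset.univ.filter fun q => I₁ q ≠ I₂ q).card ≤ m := by
    rw [← Set.ncard_coe_finset]
    simpa using hdiff
  rw [← Finset.sum_filter_of_ne (p := fun q => I₁ q ≠ I₂ q)
    (fun q _ hq => by rw [ne_eq, abs_eq_zero, sub_eq_zero] at hq; exact hq)]
  calc ∑ p ∈ Finset.univ.filter (fun q => I₁ q ≠ I₂ q), |I₁ p - I₂ p|
      ≤ (Finset.univ.filter fun q => I₁ q ≠ I₂ q).card • (255 : ℝ) := by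
        refine Finset.sum_le_card_nsmul _ _ _ fun p _ => ?_
        have h1 := hI₁ p
        have h2 := hI₂ p
        rw [Set.mem_Icc] at h1 h2
        rw [abs_le]
        constructor <;> linarith
    _ ≤ 255 * m := by
        rw [nsmul_eq_mul, mul_comm]
        gcongr

/-- Privacy of region-adaptive pixelization: with Laplace scales
`σ = 255·m/(b²·ε)` on simple grids (`b = n·s_b`) and `σ_s = 255·m/(s_b²·ε)` on
complex subgrids, all noises independent, the mechanism satisfies
`ε`-differential privacy with respect to the `m`-neighboring relation on
`[0,255]`-valued images. -/
theorem stmt_15 (G_R G_C n s_b m : ℕ) (hn : 1 ≤ n) (hs : 0 < s_b) (hm : 1 ≤ m)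
    (ε : ℝ) (hε : 0 < ε)
    (simple complex : Finset (Fin G_R × Fin G_C))
    (hpart : ∀ rc, rc ∈ simple ↔ rc ∉ complex)
    (σ σs : ℝ)
    (hσ : σ = 255 * m / (((n : ℝ) * s_b) ^ 2 * ε))
    (hσs : σs = 255 * m / ((s_b : ℝ) ^ 2 * ε))
    (I₁ I₂ : Fin (G_R * (n * s_b)) × Fin (G_C * (n * s_b)) → ℝ)
    (hI₁ : ∀ q, I₁ q ∈ Set.Icc (0 : ℝ) 255) (hI₂ : ∀ q, I₂ q ∈ Set.Icc (0 : ℝ) 255)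
    (hdiff : {q | I₁ q ≠ I₂ q}.ncard ≤ m)
    (S : Set (({rc // rc ∈ simple} ⊕ ({rc // rc ∈ complex} × (Fin n × Fin n))) → ℝ))
    (hS : MeasurableSet S) :
    regionAdaptiveMech G_R G_C n s_b σ σs simple complex I₁ S ≤
      ENNReal.ofReal (Real.exp ε) *
        regionAdaptiveMech G_R G_C n s_b σ σs simple complex I₂ S := by
  have hmR : (0 : ℝ) < m := by exact_mod_cast hm
  have hnR : (0 : ℝ) < n := by exact_mod_cast hn
  have hsR : (0 : ℝ) < s_b := by exact_mod_cast hs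
  have hσpos : 0 < σ := by rw [hσ]; positivity
  have hσspos : 0 < σs := by rw [hσs]; positivity
  let w := fun i => ε / (255 * m) *
    ∑ p ∈ cell G_R G_C n s_b simple complex i, |I₁ p - I₂ p|
  have hw : ∑ i, w i ≤ ε := by
    have hdisj : ∑ i, ∑ p ∈ cell G_R G_C n s_b simple complex i, |I₁ p - I₂ p| ≤
        ∑ p, |I₁ p - I₂ p| := by
      rw [← Finset.sum_biUnion]
      · exact Finset.sum_le_univ_sum_of_nonneg fun p => abs_nonneg _
      · intro i _ j _ hij
        exact Finset.disjoint_left.2 fun p hi hj => hij (cell_unique hpart hi hj)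
    calc ∑ i, w i = ε / (255 * m) *
          ∑ i, ∑ p ∈ cell G_R G_C n s_b simple complex i, |I₁ p - I₂ p| := by
          rw [Finset.mul_sum]
      _ ≤ ε / (255 * m) * (255 * m) := by
          gcongr
          exact hdisj.trans (sum_abs_diff_le I₁ I₂ hI₁ hI₂ m hdiff)
      _ = ε := by field_simp
  refine le_trans (b := ENNReal.ofReal (Real.exp (∑ i, w i)) *
    regionAdaptiveMech G_R G_C n s_b σ σs simple complex I₂ S) ?_ (by gcongr)
  unfold regionAdaptiveMech
  refine @pi_le_of_le _ _ _ _ ?_ w ?_ S hS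
  · rintro (rc | x)
    · exact laplace_map_sigmaFinite _ _
    · exact laplace_map_sigmaFinite _ _
  · rintro (rc | x) s
    · refine laplace_map_le hσpos ?_ s
      rw [hσ]
      unfold gridMean
      push_cast
      exact mean_shift_le _ I₁ I₂ (by positivity) hmR hε
    · refine laplace_map_le hσspos ?_ s
      rw [hσs]
      exact mean_shift_le _ I₁ I₂ (by positivity) hmR hε
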